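/- If 0 ≤ h < i ≤ n and x_h + y_h ≤ x_i, then y_i ≤ x_i − x_h. -/

import Mathlib

/-- `pSum L i` is `x_i`: the sum of the first `i` elements of `L` (so `pSum L 0 = 0`). -/
def pSum (L : List ℝ) (i : ℕ) : ℝ := (L.take i).sum

/-- A valid partition of `L`: a partition of `L` into nonempty consecutive blocks
whose totals are non-decreasing from left to right. -/
def ValidPartition (L : List ℝ) (P : List (List ℝ)) : Prop :=
  P.flatten = L ∧ (∀ B ∈ P, B ≠ []) ∧ List.Chain' (· ≤ ·) (P.map List.sum)

/-- The total of the last block of a partition (`0` for the empty partition). -/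
def lastTotal (P : List (List ℝ)) : ℝ := (P.map List.sum).getLastD 0

/-- `wrapLen L` is the wrapping length `y_{|L|}`: the minimum, over all valid
partitions of `L`, of the total of the last block (with `wrapLen [] = 0`,
realized by the empty partition). -/
noncomputable def wrapLen (L : List ℝ) : ℝ :=
  sInf {t | ∃ P, ValidPartition L P ∧ lastTotal P = t}

/-! The last block total of a partition is a suffix sum of the list, so it takes only finitely many
values and the infimum `y_h` is attained by some valid partition. Adding `(l_{h+1}, …, l_i)` to that
partition as a new last block keeps it valid, since `y_h ≤ x_i - x_h`, and makes the last total
`x_i - x_h`. -/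

@[simp]
lemma lastTotal_append_singleton (P : List (List ℝ)) (B : List ℝ) :
    lastTotal (P ++ [B]) = B.sum := by
  simp [lastTotal]

lemma exists_suffix_flatten_sum_eq_lastTotal (P : List (List ℝ)) :
    ∃ S, S <:+ P.flatten ∧ S.sum = lastTotal P := by
  rcases P.eq_nil_or_concat' with rfl | ⟨Q, B, rfl⟩
  · exact ⟨[], List.nil_suffix, rfl⟩
  · exact ⟨B, ⟨Q.flatten, by simp⟩, by simp⟩

lemma finite_lastTotal_image_validPartition (L : List ℝ) :
    (lastTotal '' {P | ValidPartition L P}).Finite := by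
  refine (L.tails.finite_toSet.image List.sum).subset ?_
  rintro _ ⟨P, ⟨rfl, -⟩, rfl⟩
  obtain ⟨S, hS, hsum⟩ := exists_suffix_flatten_sum_eq_lastTotal P
  exact ⟨S, (List.mem_tails _ _).2 hS, hsum⟩

lemma exists_validPartition (L : List ℝ) : ∃ P, ValidPartition L P := by
  by_cases hL : L = []
  · exact ⟨[], by simp [hL], by simp, List.isChain_nil⟩
  · exact ⟨[L], by simp, by simpa using hL, List.isChain_singleton _⟩

lemma isLeast_wrapLen (L : List ℝ) :
    IsLeast (lastTotal '' {P | ValidPartition L P}) (wrapLen L) :=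
  have hne : {P | ValidPartition L P}.Nonempty := exists_validPartition L
  (finite_lastTotal_image_validPartition L).isCompact.isLeast_sInf (hne.image lastTotal)

lemma ValidPartition.append_singleton {L B : List ℝ} {P : List (List ℝ)}
    (hP : ValidPartition L P) (hB : B ≠ []) (hle : lastTotal P ≤ B.sum) :
    ValidPartition (L ++ B) (P ++ [B]) := by
  obtain ⟨rfl, hne, hchain⟩ := hP
  refine ⟨by simp, by simpa [or_imp, forall_and] using ⟨hne, hB⟩, ?_⟩
  rw [List.map_append]
  refine hchain.append (List.isChain_singleton _) fun x hx y hy => ?_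
  have hx_eq : lastTotal P = x := by
    rw [lastTotal, List.getLastD_eq_getLast?, Option.mem_def.1 hx, Option.getD_some]
  have hy_eq : B.sum = y := by simpa using hy
  rwa [← hx_eq, ← hy_eq]

lemma wrapLen_append_le {L B : List ℝ} (hB : B ≠ []) (hle : wrapLen L ≤ B.sum) :
    wrapLen (L ++ B) ≤ B.sum := by
  obtain ⟨P, hP, hP_min⟩ := (isLeast_wrapLen L).1
  exact (isLeast_wrapLen (L ++ B)).2
    ⟨P ++ [B], hP.append_singleton hB (hP_min.trans_le hle), lastTotal_append_singleton P B⟩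

theorem stmt_2_general (L : List ℝ) (h i : ℕ) (hhi : h < i) (hin : i ≤ L.length)
    (hfold : pSum L h + wrapLen (L.take h) ≤ pSum L i) :
    wrapLen (L.take i) ≤ pSum L i - pSum L h := by
  obtain ⟨B, hB⟩ : L.take h <+: L.take i := List.take_prefix_take_left hhi.le
  have hB_ne : B ≠ [] := by
    rintro rfl
    have hlen := congrArg List.length hB
    simp only [List.append_nil, List.length_take] at hlen
    omega
  have hB_sum : pSum L h + B.sum = pSum L i := by
    rw [pSum, pSum, ← hB, List.sum_append]
  have hle : wrapLen (L.take h) ≤ B.sum := by linarith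
  rw [← hB, ← hB_sum, add_sub_cancel_left]
  exact wrapLen_append_le hB_ne hle

/-- If `0 ≤ h < i ≤ n` and `x_h + y_h ≤ x_i`, then `y_i ≤ x_i − x_h`. -/
theorem stmt_2 (L : List ℝ) (hL : ∀ l ∈ L, 0 < l) (h i : ℕ) (hhi : h < i)
    (hin : i ≤ L.length) (hfold : pSum L h + wrapLen (L.take h) ≤ pSum L i) :
    wrapLen (L.take i) ≤ pSum L i - pSum L h :=
  stmt_2_general L h i hhi hin hfold
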